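/- arXiv:1110.0224 — 2 statements merged into one kernel-verified Lean document; each statement's English description precedes it below -/
import Mathlib

section
/- (Theorem 2, upper bound.) Let n > d > ℓ ≥ 1 be integers and let r be the unique integer with 0 < r ≤ ℓ+1 and r ≡ d+1 (mod ℓ+1). Then f^(ℓ)(n,d) · ⌈(d+1)/(ℓ+1)⌉^r · ⌊(d+1)/(ℓ+1)⌋^(ℓ+1-r) ≤ 2^(n-ℓ)·C(n,ℓ); equivalently, c^(ℓ)(n,d) ≤ ⌈(d+1)/(ℓ+1)⌉^(-r) · ⌊(d+1)/(ℓ+1)⌋^(-(ℓ+1-r)). -/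
/-!
The bound comes from a colouring of the `ℓ`-subcubes in which every `d`-subcube contains all colours.
Write `d + 1 = p 0 + ⋯ + p ℓ` as evenly as possible, so that `r` of the parts are
`⌈(d+1)/(ℓ+1)⌉` and the others `⌊(d+1)/(ℓ+1)⌋`. The `ℓ` stars of a subcube `A` split the
coordinates into `ℓ + 1` gaps; colour `A` by the number of ones in the `k`-th gap modulo `p k`, for
`k = 0, …, ℓ`. There are `∏ p k` colours. Given a `d`-subcube `B`, keep as stars of `A` those stars
of `B` which leave exactly `p k - 1` other stars of `B` in the `k`-th gap; filling these with zeros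
and ones adds any number from `0` to `p k - 1` to the ones of the gap, so every residue is reached
(`exists_subcube_of_color`). The filling is described by a word `word p need` on the ranks of the
stars of `B`. Every colour class is therefore a covering set, and since the classes partition
`H_n^ℓ`, which has `2^(n-ℓ) * C(n,ℓ)` elements, the smallest one obeys the bound.

Ranks and gaps are handled with `Nat.count`, after extending subcubes to all of `ℕ`.
-/

/-- The dimension of a subcube of `Q_n`, represented as a function
`Fin n → Option Bool` (`none` = ∗): the number of ∗-coordinates. -/
def Subcube.dim {n : ℕ} (s : Fin n → Option Bool) : ℕ :=
  (Finset.univ.filter (fun i => s i = none)).card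

/-- `cubes n ℓ` is `H_n^ℓ`, the set of all `ℓ`-dimensional subcubes of `Q_n`. -/
def cubes (n ℓ : ℕ) : Finset (Fin n → Option Bool) :=
  Finset.univ.filter (fun s => Subcube.dim s = ℓ)

/-- `containedIn A B`: the subcube `A` is contained in the subcube `B`, i.e. every
∗-coordinate of `A` is a ∗-coordinate of `B` and they agree wherever both are non-∗
(equivalently every coordinate fixed in `B` is fixed to the same value in `A`). -/
def containedIn {n : ℕ} (A B : Fin n → Option Bool) : Prop :=
  ∀ i : Fin n, ∀ b : Bool, B i = some b → A i = some b

instance {n : ℕ} (A B : Fin n → Option Bool) : Decidable (containedIn A B) := by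
  unfold containedIn; infer_instance

/-- `IsCover n d ℓ S`: `S` is a `(d,ℓ)`-covering set of `Q_n`. -/
def IsCover (n d ℓ : ℕ) (S : Finset (Fin n → Option Bool)) : Prop :=
  S ⊆ cubes n ℓ ∧ ∀ B ∈ cubes n d, ∃ A ∈ S, containedIn A B

/-- `coverNum n d ℓ = f^(ℓ)(n,d)`, the minimum size of a `(d,ℓ)`-covering set of `Q_n`. -/
noncomputable def coverNum (n d ℓ : ℕ) : ℕ :=
  sInf {k | ∃ S : Finset (Fin n → Option Bool), IsCover n d ℓ S ∧ S.card = k}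

/-- `polyNum n d ℓ = pc^(ℓ)(n,d)`, the largest number `m` of colors admitting a
`d,ℓ`-polychromatic coloring of `H_n^ℓ`. -/
noncomputable def polyNum (n d ℓ : ℕ) : ℕ :=
  sSup {m | ∃ χ : (Fin n → Option Bool) → Fin m,
    ∀ B ∈ cubes n d, ∀ c : Fin m, ∃ A ∈ cubes n ℓ, containedIn A B ∧ χ A = c}

/-! ### Gap counts and ranks -/

/-- Extension of a subcube to a function on `ℕ`, with the value `0` outside `[0, n)`, so that no
star and no one is added. -/
def extend {n : ℕ} (A : Fin n → Option Bool) (i : ℕ) : Option Bool :=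
  if h : i < n then A ⟨i, h⟩ else some false

/-- The number of ones of `A` in its `k`-th gap, i.e. preceded by exactly `k` stars. -/
def gapOnes {n : ℕ} (A : Fin n → Option Bool) (k : ℕ) : ℕ :=
  Nat.count (fun i => extend A i = some true ∧ Nat.count (fun j => extend A j = none) i = k) n

/-- The colour of `A`: the number of ones in the `k`-th gap modulo `p k`, for `k ≤ ℓ`. -/
def gapColor {n : ℕ} (ℓ : ℕ) (p : ℕ → ℕ) (A : Fin n → Option Bool) : Fin (ℓ + 1) → ℕ :=
  fun k => gapOnes A k % p k

theorem dim_eq_count {n : ℕ} (A : Fin n → Option Bool) :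
    Subcube.dim A = Nat.count (fun j => extend A j = none) n := by
  rw [Nat.count_eq_card_filter_range, Subcube.dim]
  refine Finset.card_bij (fun i _ => i.val) ?_ ?_ ?_
  · intro i hi
    refine Finset.mem_filter.mpr ⟨Finset.mem_range.mpr i.isLt, ?_⟩
    simpa [extend] using hi
  · intro i _ j _ h
    exact Fin.ext h
  · intro j hj
    simp only [Finset.mem_filter, Finset.mem_range] at hj
    exact ⟨⟨j, hj.1⟩, by simpa [extend, hj.1] using hj.2, rfl⟩

/-- Enumerating the elements satisfying `P` by their rank `Nat.count P i`, a condition on the rank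
is counted on ranks. -/
theorem count_rank (P Q : ℕ → Prop) [DecidablePred P] [DecidablePred Q] (m : ℕ) :
    Nat.count (fun i => P i ∧ Q (Nat.count P i)) m = Nat.count Q (Nat.count P m) := by
  induction m with
  | zero => simp
  | succ m ih =>
    rw [Nat.count_succ, ih, Nat.count_succ P]
    by_cases h : P m
    · simp [h, Nat.count_succ]
    · simp [h]

theorem count_or (P Q : ℕ → Prop) [DecidablePred P] [DecidablePred Q]
    (h : ∀ i, P i → ¬ Q i) (m : ℕ) :
    Nat.count (fun i => P i ∨ Q i) m = Nat.count P m + Nat.count Q m := by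
  induction m with
  | zero => simp
  | succ m ih =>
    have := h m
    rw [Nat.count_succ, Nat.count_succ, Nat.count_succ, ih]
    by_cases h1 : P m <;> by_cases h2 : Q m <;> simp_all <;> omega

/-! ### The filling word -/

/-- The partial sum `p 0 + ⋯ + p (k - 1)`. -/
def psum (p : ℕ → ℕ) (k : ℕ) : ℕ := ∑ i ∈ Finset.range k, p i

/-- The rank `t` is separating if it is the last one of one of the consecutive blocks of lengths
`p 0, p 1, …`; the star of rank `t` is then kept. -/
def IsSep (p : ℕ → ℕ) (t : ℕ) : Prop := ∃ j, t + 1 = psum p (j + 1)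

open Classical in
/-- The word with stars at the separating ranks and with `need k` ones, put first, in block `k`. -/
noncomputable def word (p need : ℕ → ℕ) (t : ℕ) : Option Bool :=
  if IsSep p t then none
  else some (decide (t < psum p (Nat.count (IsSep p) t) + need (Nat.count (IsSep p) t)))

theorem psum_succ (p : ℕ → ℕ) (k : ℕ) : psum p (k + 1) = psum p k + p k :=
  Finset.sum_range_succ _ _

theorem psum_mono (p : ℕ → ℕ) : Monotone (psum p) :=
  monotone_nat_of_le_succ fun k => by rw [psum_succ]; omega

theorem not_sep (p : ℕ → ℕ) {k m : ℕ} (h : m + 1 < p k) : ¬ IsSep p (psum p k + m) := by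
  rintro ⟨j, hj⟩
  rcases Nat.lt_or_ge j k with h1 | h1
  · have := psum_mono p (show j + 1 ≤ k by omega)
    omega
  · have := psum_mono p (show k + 1 ≤ j + 1 by omega)
    rw [psum_succ] at this
    omega

open Classical in
/-- Every rank of block `k` is preceded by exactly `k` separating ranks: in the constructed subcube
it lies in gap `k`. -/
theorem count_sep (p : ℕ → ℕ) (hp : ∀ k, 0 < p k) (k m : ℕ) (h : m < p k) :
    Nat.count (IsSep p) (psum p k + m) = k := by
  have step : ∀ k, Nat.count (IsSep p) (psum p k) = k →
      ∀ m, m < p k → Nat.count (IsSep p) (psum p k + m) = k := by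
    intro k hk m
    induction m with
    | zero => intro _; simpa using hk
    | succ m ih =>
      intro hm
      rw [← Nat.add_assoc, Nat.count_succ, ih (by omega), if_neg (not_sep p hm), Nat.add_zero]
  refine step k ?_ m h
  clear h
  induction k with
  | zero => simp [psum]
  | succ k ih =>
    have h1 := hp k
    have h2 : psum p (k + 1) = (psum p k + (p k - 1)) + 1 := by rw [psum_succ]; omega
    rw [h2, Nat.count_succ, step k ih _ (by omega), if_pos ⟨k, h2.symm⟩]

theorem word_eq_none (p need : ℕ → ℕ) (t : ℕ) : word p need t = none ↔ IsSep p t := by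
  unfold word
  split_ifs with h <;> simp [h]

open Classical in
/-- On the ranks `0, …, d - 1` the word contributes `need k` ones to gap `k`. The last gap is not
closed by a star: rank `d` would be the separating one, as `psum p (ℓ + 1) = d + 1`. -/
theorem count_word_ones (p need : ℕ → ℕ) (hp : ∀ k, 0 < p k) (hneed : ∀ k, need k < p k)
    {ℓ d k : ℕ} (hd : psum p (ℓ + 1) = d + 1) (hk : k ≤ ℓ) :
    Nat.count (fun t => word p need t = some true ∧ Nat.count (IsSep p) t = k) d = need k := by
  have hset : (Finset.range d).filter
      (fun t => word p need t = some true ∧ Nat.count (IsSep p) t = k)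
      = Finset.Ico (psum p k) (psum p k + need k) := by
    ext t
    simp only [Finset.mem_filter, Finset.mem_range, Finset.mem_Ico]
    constructor
    · rintro ⟨_, hw, hc⟩
      have hlt : t < psum p k + need k := by
        unfold word at hw
        split_ifs at hw with h
        simpa [hc] using hw
      refine ⟨?_, hlt⟩
      by_contra! hlt'
      cases k with
      | zero => simp [psum] at hlt'
      | succ k =>
        have h1 := hp k
        rw [psum_succ] at hlt'
        have h2 := Nat.count_monotone (IsSep p) (show t ≤ psum p k + (p k - 1) by omega)
        rw [count_sep p hp k _ (by omega)] at h2
        omega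
    · rintro ⟨h1, h2⟩
      obtain ⟨m, rfl⟩ := Nat.exists_eq_add_of_le h1
      have h3 := hneed k
      have h4 := psum_mono p (show k + 1 ≤ ℓ + 1 by omega)
      rw [psum_succ] at h4
      have hc := count_sep p hp k m (by omega)
      refine ⟨by omega, ?_, hc⟩
      unfold word
      rw [if_neg (not_sep p (by omega)), hc]
      simpa using h2
  rw [Nat.count_eq_card_filter_range, hset, Nat.card_Ico]
  omega

/-! ### Every subcube of dimension `d` contains all colours -/

open Classical in
/-- The colouring by gap counts is polychromatic: each colour occurs inside each `d`-subcube. -/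
theorem exists_subcube_of_color {n d ℓ : ℕ} (p : ℕ → ℕ) (hp : ∀ k, 0 < p k)
    (hd : psum p (ℓ + 1) = d + 1) (B : Fin n → Option Bool) (hB : Subcube.dim B = d)
    (c : Fin (ℓ + 1) → ℕ) (hc : ∀ k, c k < p k) :
    ∃ A : Fin n → Option Bool, Subcube.dim A = ℓ ∧ containedIn A B ∧ gapColor ℓ p A = c := by
  set rk : ℕ → ℕ := fun i => Nat.count (fun j => extend B j = none) i with hrk
  have hrkn : rk n = d := by rw [hrk, ← hB, dim_eq_count]
  -- The ones of `B` in the gaps of `A`; the gaps do not depend on the filling.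
  set y : ℕ → ℕ := fun k =>
    Nat.count (fun i => extend B i = some true ∧ Nat.count (IsSep p) (rk i) = k) n with hy
  obtain ⟨need, hneed, hres⟩ : ∃ need : ℕ → ℕ, (∀ k, need k < p k) ∧
      ∀ k : Fin (ℓ + 1), (y k + need k) % p k = c k := by
    -- Subtracting the residue of `y k` from `p k` keeps the difference nonnegative.
    refine ⟨fun k => ((if h : k < ℓ + 1 then c ⟨k, h⟩ else 0) + (p k - y k % p k)) % p k,
      fun k => Nat.mod_lt _ (hp k), fun k => ?_⟩
    have h1 := Nat.mod_lt (y k) (hp k)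
    have h2 := Nat.div_add_mod (y k) (p k)
    simp only [k.isLt, dif_pos, Fin.eta, Nat.add_mod_mod]
    have : y k + (c k + (p k - y k % p k)) = c k + p k * (y k / p k + 1) := by
      rw [Nat.mul_add]; omega
    rw [this, Nat.add_mul_mod_self_left, Nat.mod_eq_of_lt (hc k)]
  let A : Fin n → Option Bool := fun i => if B i = none then word p need (rk i) else B i
  have hA : ∀ i, extend A i = if extend B i = none then word p need (rk i) else extend B i := by
    intro i
    by_cases h : i < n <;> simp [extend, A, h]
  have hnone : ∀ i, extend A i = none ↔ (extend B i = none ∧ IsSep p (rk i)) := by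
    intro i
    rw [hA, ← word_eq_none p need]
    split_ifs with h <;> simp [h]
  have hgap : ∀ i, Nat.count (fun j => extend A j = none) i = Nat.count (IsSep p) (rk i) := by
    intro i
    simp only [hnone]
    exact count_rank (fun j => extend B j = none) (IsSep p) i
  refine ⟨A, ?_, ?_, ?_⟩
  · have h1 := hp ℓ
    have h2 := psum_succ p ℓ
    have h3 : d = psum p ℓ + (p ℓ - 1) := by omega
    rw [dim_eq_count, hgap, hrkn, h3, count_sep p hp _ _ (by omega)]
  · intro i b hb
    simp [A, hb]
  · funext k
    have hk : gapOnes A k = y k + need k := by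
      rw [← count_word_ones p need hp hneed hd (Nat.lt_succ_iff.mp k.isLt), ← hrkn, hrk]
      simp only
      rw [← count_rank, hy]
      simp only
      rw [← count_or]
      · unfold gapOnes
        congr 1
        funext i
        rw [hgap, hA]
        by_cases h : extend B i = none <;> simp [h, hrk]
      · rintro i ⟨h, _⟩ ⟨h', _⟩
        simp [h] at h'
    rw [gapColor, hk, hres]

/-! ### Counting -/

theorem card_cubes_le (n ℓ : ℕ) : (cubes n ℓ).card ≤ 2 ^ (n - ℓ) * n.choose ℓ := by
  have hmaps : Set.MapsTo (fun s : Fin n → Option Bool => Finset.univ.filter (fun i => s i = none))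
      (cubes n ℓ) (Finset.powersetCard ℓ (Finset.univ : Finset (Fin n))) := by
    intro s hs
    rw [Finset.mem_coe, cubes, Finset.mem_filter] at hs
    exact Finset.mem_coe.mpr (Finset.mem_powersetCard.mpr ⟨Finset.subset_univ _, hs.2⟩)
  refine (Finset.card_le_mul_card_image_of_maps_to hmaps (2 ^ (n - ℓ)) ?_).trans ?_
  · intro T hT
    rw [Finset.mem_powersetCard] at hT
    have hsub : (cubes n ℓ).filter (fun s => Finset.univ.filter (fun i => s i = none) = T) ⊆
        Fintype.piFinset (fun i => if i ∈ T then {none} else {some true, some false}) := by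
      intro s hs
      rw [Finset.mem_filter] at hs
      rw [Fintype.mem_piFinset]
      intro i
      have hi : i ∈ T ↔ s i = none := by rw [← hs.2]; simp
      rcases h : s i with _ | b
      · simp [hi, h]
      · cases b <;> simp [hi, h]
    refine (Finset.card_le_card hsub).trans ?_
    rw [Fintype.card_piFinset]
    have : ∀ i, (if i ∈ T then ({none} : Finset (Option Bool)) else {some true, some false}).card
        = if i ∈ T then 1 else 2 := by
      intro i; split_ifs <;> rfl
    simp only [this]
    rw [Finset.prod_ite, Finset.prod_const_one, one_mul, Finset.prod_const]
    have : (Finset.univ.filter (fun i => i ∉ T)) = Tᶜ := by ext; simp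
    rw [this, Finset.card_compl, hT.2, Fintype.card_fin]
  · simp

/-- Each colour class is a covering set, so has at least `coverNum n d ℓ` elements; sum over the
`∏ p k` colours. -/
theorem coverNum_mul_le {n d ℓ : ℕ} (p : ℕ → ℕ) (hp : ∀ k, 0 < p k)
    (hd : psum p (ℓ + 1) = d + 1) :
    coverNum n d ℓ * ∏ k ∈ Finset.range (ℓ + 1), p k ≤ (cubes n ℓ).card := by
  set C := Fintype.piFinset (fun k : Fin (ℓ + 1) => Finset.range (p k)) with hC
  have hcard : C.card = ∏ k ∈ Finset.range (ℓ + 1), p k := by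
    rw [hC, Fintype.card_piFinset]
    simp only [Finset.card_range]
    exact Fin.prod_univ_eq_prod_range p (ℓ + 1)
  rw [← hcard, Nat.mul_comm, Finset.card_eq_sum_card_fiberwise (f := gapColor ℓ p) (t := C)]
  · rw [← smul_eq_mul]
    refine Finset.card_nsmul_le_sum _ _ _ ?_
    intro c hc
    refine Nat.sInf_le ⟨_, ⟨Finset.filter_subset _ _, ?_⟩, rfl⟩
    intro B hB
    obtain ⟨A, hA1, hA2, hA3⟩ := exists_subcube_of_color p hp hd B
      (by simpa [cubes] using hB) c (by simpa [hC] using hc)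
    exact ⟨A, by simp [cubes, hA1, hA3], hA2⟩
  · intro A _
    simp [hC, gapColor, Nat.mod_lt _ (hp _)]

/-- Theorem 2, upper bound:
`f^(ℓ)(n,d) · ⌈(d+1)/(ℓ+1)⌉^r · ⌊(d+1)/(ℓ+1)⌋^(ℓ+1-r) ≤ 2^(n-ℓ)·C(n,ℓ)` where
`0 < r ≤ ℓ+1` and `r ≡ d+1 (mod ℓ+1)`. -/
theorem coverNum_upper_bound (n d ℓ r : ℕ) (hℓ : 1 ≤ ℓ) (hℓd : ℓ < d) (hdn : d < n)
    (hr0 : 0 < r) (hr1 : r ≤ ℓ + 1) (hrmod : r % (ℓ + 1) = (d + 1) % (ℓ + 1)) :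
    coverNum n d ℓ * (((d + 1 + ℓ) / (ℓ + 1)) ^ r * ((d + 1) / (ℓ + 1)) ^ (ℓ + 1 - r)) ≤
      2 ^ (n - ℓ) * n.choose ℓ := by
  set a := (d + 1 + ℓ) / (ℓ + 1) with ha
  set b := (d + 1) / (ℓ + 1) with hb
  have hbpos : 0 < b := Nat.div_pos (by omega) (by omega)
  have hapos : 0 < a := Nat.div_pos (by omega) (by omega)
  have hdb : (ℓ + 1) * b + (d + 1) % (ℓ + 1) = d + 1 := Nat.div_add_mod _ _
  -- The parts of `d + 1`: first `r` parts rounded up, then `ℓ + 1 - r` rounded down.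
  have hsum : r * a + (ℓ + 1 - r) * b = d + 1 := by
    rcases Nat.lt_or_ge r (ℓ + 1) with h | h
    · rw [Nat.mod_eq_of_lt h] at hrmod
      have hab : a = b + 1 := by
        rw [ha]
        refine Nat.div_eq_of_lt_le ?_ ?_
        · rw [Nat.mul_comm, Nat.mul_add]; omega
        · rw [Nat.mul_comm, Nat.mul_add, Nat.mul_add]; omega
      obtain ⟨s, hs⟩ := Nat.exists_eq_add_of_le hr1
      rw [hab, hs, Nat.add_sub_cancel_left]
      rw [← hrmod, hs] at hdb
      linarith
    · obtain rfl : r = ℓ + 1 := le_antisymm hr1 h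
      rw [Nat.mod_self] at hrmod
      have hab : a = b := by
        rw [ha]
        refine Nat.div_eq_of_lt_le ?_ ?_
        · rw [Nat.mul_comm]; omega
        · rw [Nat.mul_comm, Nat.mul_add]; omega
      rw [hab, Nat.sub_self]
      omega
  let p : ℕ → ℕ := fun k => if k < r then a else b
  have hp : ∀ k, 0 < p k := fun k => by simp only [p]; split_ifs <;> assumption
  have hp1 : ∀ k ∈ Finset.range r, p k = a := fun k hk => if_pos (Finset.mem_range.mp hk)
  have hp2 : ∀ k ∈ Finset.range (ℓ + 1 - r), p (r + k) = b := fun k _ => if_neg (by omega)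
  have hsplit : ℓ + 1 = r + (ℓ + 1 - r) := by omega
  have hd : psum p (ℓ + 1) = d + 1 := by
    rw [psum, hsplit, Finset.sum_range_add, Finset.sum_congr rfl hp1, Finset.sum_congr rfl hp2]
    simpa using hsum
  have hprod : ∏ k ∈ Finset.range (ℓ + 1), p k = a ^ r * b ^ (ℓ + 1 - r) := by
    rw [hsplit, Finset.prod_range_add, Finset.prod_congr rfl hp1]
    rw [← hsplit, Finset.prod_congr rfl hp2]
    simp
  rw [← hprod]
  exact (coverNum_mul_le p hp hd).trans (card_cubes_le n ℓ)
end

section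
/- For all integers d > ℓ ≥ 1, the sequence n ↦ c^(ℓ)(n,d) (defined for n > d) converges to a limit c_d^(ℓ) ∈ [0,1] as n → ∞, and the sequence n ↦ pc^(ℓ)(n,d) converges to a limit p_d^(ℓ) as n → ∞ (indeed pc^(ℓ)(n,d) is a bounded non-increasing sequence of positive integers, hence eventually constant). -/
/-! ### Facets and subcubes -/

lemma mem_cubes {n ℓ : ℕ} {s : Fin n → Option Bool} : s ∈ cubes n ℓ ↔ Subcube.dim s = ℓ := by
  simp [cubes]

/-- Passing to a facet does not change the dimension of a subcube. -/
lemma dim_insertNth {n : ℕ} (i : Fin (n + 1)) (b : Bool) (s : Fin n → Option Bool) :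
    Subcube.dim (i.insertNth (some b) s : Fin (n + 1) → Option Bool) = Subcube.dim s := by
  simp only [Subcube.dim, Finset.card_filter]
  rw [Fin.sum_univ_succAbove _ i]
  simp

/-- A subcube contained in a facet comes from a subcube of the smaller cube. -/
lemma insertNth_removeNth_of_eq {n : ℕ} {i : Fin (n + 1)} {b : Bool}
    {A : Fin (n + 1) → Option Bool} (h : A i = some b) :
    (i.insertNth (some b) (i.removeNth A) : Fin (n + 1) → Option Bool) = A := by
  rw [← h]; exact Fin.insertNth_self_removeNth i A

lemma containedIn_insertNth {n : ℕ} {i : Fin (n + 1)} {b : Bool}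
    {A : Fin (n + 1) → Option Bool} {B : Fin n → Option Bool}
    (h : containedIn A (i.insertNth (some b) B)) :
    A i = some b ∧ containedIn (i.removeNth A) B := by
  refine ⟨h i b (by simp), fun j c hj => h (i.succAbove j) c (by simpa using hj)⟩

/-- The star set and the fixed values can be chosen independently. -/
lemma card_cubes (n ℓ : ℕ) : (cubes n ℓ).card = 2 ^ (n - ℓ) * n.choose ℓ := by
  classical
  have hmaps : Set.MapsTo
      (fun s : Fin n → Option Bool => Finset.univ.filter (fun i => s i = none))
      (cubes n ℓ : Set (Fin n → Option Bool))
      (Finset.powersetCard ℓ (Finset.univ : Finset (Fin n)) : Set (Finset (Fin n))) := by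
    intro s hs
    have := mem_cubes.1 (Finset.mem_coe.1 hs)
    simpa [Finset.mem_powersetCard, Subcube.dim] using this
  rw [Finset.card_eq_sum_card_fiberwise hmaps]
  have hfib : ∀ T ∈ Finset.powersetCard ℓ (Finset.univ : Finset (Fin n)),
      ((cubes n ℓ).filter
        (fun s => Finset.univ.filter (fun i => s i = none) = T)).card = 2 ^ (n - ℓ) := by
    intro T hT
    have hTc : T.card = ℓ := (Finset.mem_powersetCard.1 hT).2
    have heq : (cubes n ℓ).filter (fun s => Finset.univ.filter (fun i => s i = none) = T)
        = Fintype.piFinset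
          (fun i => if i ∈ T then {none} else ({some true, some false} : Finset (Option Bool))) := by
      ext s
      have key : (∀ i, s i ∈
          (if i ∈ T then {none} else ({some true, some false} : Finset (Option Bool)))) ↔
          Finset.univ.filter (fun i => s i = none) = T := by
        rw [Finset.ext_iff]
        refine forall_congr' fun i => ?_
        by_cases hi : i ∈ T
        · simp [hi]
        · rcases hs : s i with _ | _ | _ <;> simp [hi, hs]
      rw [Fintype.mem_piFinset, key, Finset.mem_filter, mem_cubes]
      exact ⟨fun h => h.2, fun h => ⟨by rw [Subcube.dim, h, hTc], h⟩⟩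
    rw [heq, Fintype.card_piFinset]
    have : ∀ i : Fin n,
        (if i ∈ T then {none} else ({some true, some false} : Finset (Option Bool))).card
          = if i ∈ T then 1 else 2 := by
      intro i; split_ifs <;> rfl
    simp only [this]
    rw [Finset.prod_ite]
    simp [Finset.filter_not, Finset.card_sdiff, hTc]
  rw [Finset.sum_congr rfl hfib]
  simp [mul_comm]

lemma isCover_cubes (n : ℕ) {d ℓ : ℕ} (h : ℓ ≤ d) : IsCover n d ℓ (cubes n ℓ) := by
  classical
  refine ⟨subset_rfl, fun B hB => ?_⟩
  obtain ⟨T, hTs, hTc⟩ := Finset.exists_subset_card_eq (h.trans (mem_cubes.1 hB).ge)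
  -- Keep `ℓ` of the stars of `B` and fix the remaining ones to an arbitrary value.
  refine ⟨fun i => if i ∈ T then none else some ((B i).getD false), ?_, fun i b hb => ?_⟩
  · rw [mem_cubes, Subcube.dim, ← hTc]
    congr 1
    ext i
    simp
  · have : i ∉ T := fun hi => by
      have := (Finset.mem_filter.1 (hTs hi)).2
      simp [this] at hb
    simp [this, hb]

/-! ### Covering sets -/

lemma coverNum_le {n d ℓ : ℕ} {S : Finset (Fin n → Option Bool)} (h : IsCover n d ℓ S) :
    coverNum n d ℓ ≤ S.card :=
  Nat.sInf_le ⟨S, h, rfl⟩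

lemma exists_cover (n : ℕ) {d ℓ : ℕ} (h : ℓ ≤ d) :
    ∃ S : Finset (Fin n → Option Bool), IsCover n d ℓ S ∧ S.card = coverNum n d ℓ :=
  Nat.sInf_mem (s := {k | ∃ S : Finset (Fin n → Option Bool), IsCover n d ℓ S ∧ S.card = k})
    ⟨_, cubes n ℓ, isCover_cubes n h, rfl⟩

/-- The members of a covering set lying in the facet `x_i = b` form a covering set of it. -/
lemma coverNum_le_facet {n d ℓ : ℕ} {S : Finset (Fin (n + 1) → Option Bool)}
    (hS : IsCover (n + 1) d ℓ S) (i : Fin (n + 1)) (b : Bool) :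
    coverNum n d ℓ ≤ (S.filter (fun A => A i = some b)).card := by
  classical
  refine (coverNum_le (S := (S.filter (fun A => A i = some b)).image i.removeNth) ?_).trans
    Finset.card_image_le
  refine ⟨fun s hs => ?_, fun B hB => ?_⟩
  · obtain ⟨A, hA, rfl⟩ := Finset.mem_image.1 hs
    obtain ⟨hAS, hAi⟩ := Finset.mem_filter.1 hA
    rw [mem_cubes, ← dim_insertNth i b, insertNth_removeNth_of_eq hAi]
    exact mem_cubes.1 (hS.1 hAS)
  · obtain ⟨A, hA, hAB⟩ := hS.2 (i.insertNth (some b) B)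
      (mem_cubes.2 ((dim_insertNth i b B).trans (mem_cubes.1 hB)))
    obtain ⟨hAi, hc⟩ := containedIn_insertNth hAB
    exact ⟨_, Finset.mem_image_of_mem _ (Finset.mem_filter.2 ⟨hA, hAi⟩), hc⟩

/-- The number of facets containing a subcube is its codimension. -/
lemma card_facets {n : ℕ} (A : Fin n → Option Bool) :
    ∑ i : Fin n, ∑ b : Bool, (if A i = some b then 1 else 0) = n - Subcube.dim A := by
  have h1 : ∀ i : Fin n, (∑ b : Bool, (if A i = some b then 1 else 0))
      = if ¬ A i = none then 1 else 0 := by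
    intro i
    rcases A i with _ | _ | _ <;> simp
  rw [Finset.sum_congr rfl fun i _ => h1 i, ← Finset.card_filter, Finset.filter_not,
    Finset.card_sdiff]
  simp [Subcube.dim]

/-- Double counting of the pairs (member of a minimum covering set, facet containing it). -/
lemma coverNum_succ (n : ℕ) {d ℓ : ℕ} (h : ℓ ≤ d) :
    2 * (n + 1) * coverNum n d ℓ ≤ (n + 1 - ℓ) * coverNum (n + 1) d ℓ := by
  obtain ⟨S, hS, hc⟩ := exists_cover (n + 1) h
  calc 2 * (n + 1) * coverNum n d ℓ
      = ∑ _i : Fin (n + 1), ∑ _b : Bool, coverNum n d ℓ := by simp; ring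
    _ ≤ ∑ i : Fin (n + 1), ∑ b : Bool, (S.filter (fun A => A i = some b)).card :=
        Finset.sum_le_sum fun i _ => Finset.sum_le_sum fun b _ => coverNum_le_facet hS i b
    _ = ∑ A ∈ S, ∑ i : Fin (n + 1), ∑ b : Bool, (if A i = some b then 1 else 0) := by
        simp only [Finset.card_filter]
        rw [Finset.sum_comm]
        rw [Finset.sum_congr rfl fun b _ => Finset.sum_comm, Finset.sum_comm]
        exact Finset.sum_congr rfl fun A _ => Finset.sum_comm
    _ = ∑ A ∈ S, (n + 1 - ℓ) := by
        refine Finset.sum_congr rfl fun A hA => ?_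
        rw [card_facets, mem_cubes.1 (hS.1 hA)]
    _ = (n + 1 - ℓ) * coverNum (n + 1) d ℓ := by
        rw [Finset.sum_const, hc, smul_eq_mul, mul_comm]

lemma density_le_succ {n d ℓ : ℕ} (h : ℓ ≤ d) (hn : ℓ ≤ n) :
    (coverNum n d ℓ : ℝ) / (2 ^ (n - ℓ) * n.choose ℓ) ≤
      (coverNum (n + 1) d ℓ : ℝ) / (2 ^ (n + 1 - ℓ) * (n + 1).choose ℓ) := by
  have h1 : (2 * (n + 1) * coverNum n d ℓ : ℝ) ≤
      ((n + 1 - ℓ : ℕ) : ℝ) * coverNum (n + 1) d ℓ := by exact_mod_cast coverNum_succ n h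
  have h2 : ((n + 1 : ℝ)) * n.choose ℓ = (n + 1).choose ℓ * ((n + 1 - ℓ : ℕ) : ℝ) := by
    have h3 : (n + 1) * n.choose ℓ = (n + 1).choose ℓ * (n + 1 - ℓ) := by
      rw [mul_comm, Nat.choose_mul_succ_eq]
    exact_mod_cast h3
  have hc : (0 : ℝ) < n.choose ℓ := by exact_mod_cast Nat.choose_pos hn
  have hc' : (0 : ℝ) < (n + 1).choose ℓ := by
    exact_mod_cast Nat.choose_pos (hn.trans n.le_succ)
  have hk : (0 : ℝ) < ((n + 1 - ℓ : ℕ) : ℝ) := by exact_mod_cast (by omega : 0 < n + 1 - ℓ)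
  have hpow : (2 : ℝ) ^ (n + 1 - ℓ) = 2 * 2 ^ (n - ℓ) := by
    rw [Nat.sub_add_comm hn, pow_succ, mul_comm]
  rw [hpow, div_le_div_iff₀ (by positivity) (by positivity)]
  -- After multiplying by `n + 1 - ℓ`, the identity `h2` reduces the inequality to `h1`.
  refine le_of_mul_le_mul_left ?_ hk
  calc ((n + 1 - ℓ : ℕ) : ℝ) * (coverNum n d ℓ * (2 * 2 ^ (n - ℓ) * (n + 1).choose ℓ))
      = 2 * coverNum n d ℓ * 2 ^ (n - ℓ) * ((n + 1).choose ℓ * ((n + 1 - ℓ : ℕ) : ℝ)) := by ring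
    _ = (2 ^ (n - ℓ) * n.choose ℓ) * (2 * (n + 1) * coverNum n d ℓ) := by rw [← h2]; ring
    _ ≤ (2 ^ (n - ℓ) * n.choose ℓ) * (((n + 1 - ℓ : ℕ) : ℝ) * coverNum (n + 1) d ℓ) := by
        gcongr
    _ = _ := by ring

/-- Also valid for `n < ℓ`, where the denominator and hence the quotient is `0`. -/
lemma density_le_one (n : ℕ) {d ℓ : ℕ} (h : ℓ ≤ d) :
    (coverNum n d ℓ : ℝ) / (2 ^ (n - ℓ) * n.choose ℓ) ≤ 1 := by
  refine div_le_one_of_le₀ ?_ (by positivity)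
  have := coverNum_le (isCover_cubes n h)
  rw [card_cubes] at this
  exact_mod_cast this

/-! ### Polychromatic colorings -/

/-- The numbers of colors of `d,ℓ`-polychromatic colorings of `H_n^ℓ`; its supremum is
`polyNum n d ℓ`. -/
def polySet (n d ℓ : ℕ) : Set ℕ :=
  {m | ∃ χ : (Fin n → Option Bool) → Fin m,
    ∀ B ∈ cubes n d, ∀ c : Fin m, ∃ A ∈ cubes n ℓ, containedIn A B ∧ χ A = c}

/-- A polychromatic coloring restricts to the facet `x_0 = 0`. -/
lemma polySet_succ (n d ℓ : ℕ) : polySet (n + 1) d ℓ ⊆ polySet n d ℓ := by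
  rintro m ⟨χ, hχ⟩
  refine ⟨fun s => χ ((0 : Fin (n + 1)).insertNth (some false) s), fun B hB c => ?_⟩
  obtain ⟨A, hA, hAB, hAc⟩ := hχ ((0 : Fin (n + 1)).insertNth (some false) B)
    (mem_cubes.2 ((dim_insertNth 0 false B).trans (mem_cubes.1 hB))) c
  obtain ⟨hA0, hc⟩ := containedIn_insertNth hAB
  have hins := insertNth_removeNth_of_eq hA0
  refine ⟨_, ?_, hc, by simp only [hins]; exact hAc⟩
  rw [mem_cubes, ← dim_insertNth 0 false, hins]
  exact mem_cubes.1 hA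

/-- For `n ≥ d` some `d`-cube exists, and its `ℓ`-subcubes show every color. -/
lemma polySet_bddAbove {n d : ℕ} (ℓ : ℕ) (hn : d ≤ n) : BddAbove (polySet n d ℓ) := by
  refine ⟨(cubes n ℓ).card, ?_⟩
  rintro m ⟨χ, hχ⟩
  have hne : (cubes n d).Nonempty := by
    rw [← Finset.card_pos, card_cubes]
    exact Nat.mul_pos (by positivity) (Nat.choose_pos hn)
  obtain ⟨B, hB⟩ := hne
  have := Finset.card_le_card_of_surjOn (s := cubes n ℓ) (t := (Finset.univ : Finset (Fin m))) χ
    (fun c _ => by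
      obtain ⟨A, hA, -, hc⟩ := hχ B hB c
      exact ⟨A, hA, hc⟩)
  simpa using this

lemma polyNum_succ_le {n d : ℕ} (ℓ : ℕ) (hn : d ≤ n) : polyNum (n + 1) d ℓ ≤ polyNum n d ℓ := by
  change sSup (polySet (n + 1) d ℓ) ≤ sSup (polySet n d ℓ)
  rcases (polySet (n + 1) d ℓ).eq_empty_or_nonempty with h | h
  · simp [h]
  · exact csSup_le_csSup (polySet_bddAbove ℓ hn) h (polySet_succ n d ℓ)

/-- for `d > ℓ ≥ 1`, the sequence `n ↦ c^(ℓ)(n,d)` converges to a limit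
in `[0,1]`, and `n ↦ pc^(ℓ)(n,d)` is eventually constant (hence converges). -/
theorem limits_exist (d ℓ : ℕ) (hℓ : 1 ≤ ℓ) (hℓd : ℓ < d) :
    (∃ c : ℝ, c ∈ Set.Icc (0 : ℝ) 1 ∧
      Filter.Tendsto
        (fun n : ℕ => (coverNum n d ℓ : ℝ) / (2 ^ (n - ℓ) * n.choose ℓ))
        Filter.atTop (nhds c)) ∧
    (∃ p : ℕ, ∃ N : ℕ, ∀ n : ℕ, N ≤ n → polyNum n d ℓ = p) := by
  constructor
  · have hmono : Monotone (fun n : ℕ =>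
        (coverNum (n + d) d ℓ : ℝ) / (2 ^ (n + d - ℓ) * (n + d).choose ℓ)) := by
      refine monotone_nat_of_le_succ fun n => ?_
      rw [Nat.add_right_comm n 1 d]
      exact density_le_succ hℓd.le (by omega)
    have hlim := tendsto_atTop_ciSup hmono
      ⟨1, by rintro _ ⟨n, rfl⟩; exact density_le_one (n + d) hℓd.le⟩
    refine ⟨_, ?_, (Filter.tendsto_add_atTop_iff_nat
      (f := fun n : ℕ => (coverNum n d ℓ : ℝ) / (2 ^ (n - ℓ) * n.choose ℓ)) d).1 hlim⟩
    exact isClosed_Icc.mem_of_tendsto hlim (Filter.Eventually.of_forall fun n =>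
      ⟨by positivity, density_le_one (n + d) hℓd.le⟩)
  · have hanti : Antitone (fun n : ℕ => polyNum (n + d) d ℓ) := by
      refine antitone_nat_of_succ_le fun n => ?_
      rw [Nat.add_right_comm n 1 d]
      exact polyNum_succ_le ℓ (by omega)
    -- The sequence is constant from the point where it attains its minimum.
    obtain ⟨k, hk⟩ := Nat.sInf_mem (Set.range_nonempty fun n : ℕ => polyNum (n + d) d ℓ)
    refine ⟨sInf (Set.range fun n : ℕ => polyNum (n + d) d ℓ), k + d, fun n hn => le_antisymm ?_
      (Nat.sInf_le (Set.mem_range.2 ⟨n - d, ?_⟩))⟩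
    · have := hanti (show k ≤ n - d by omega)
      simp only [Nat.sub_add_cancel (show d ≤ n by omega)] at this
      exact this.trans hk.le
    · simp only [Nat.sub_add_cancel (show d ≤ n by omega)]
end
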